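/- Suppose that every irreducible factor of the root system Φ is of type A_m, B_m, C_m, or D_m for some m (i.e., Φ contains no exceptional factor). Then there exists a sequence w_Δ = w_0, w_1, …, w_r = 1 in W such that for every 1 ≤ i ≤ r, either w_{i−1} <_∅ w_i in the weak left order, or w_i = u w_{i−1} for some u ∈ W_Ω. -/

import Mathlib

/-! Common framework: a reduced (crystallographic) root system `Φ` in a real vector
space `V`, with Weyl group `W` (generated by the reflections `s_α`, `α ∈ Φ`, inside the
group of linear automorphisms of `V`), a base `Δ` of simple roots with positive system
`Pos = Φ⁺`, and the associated combinatorics. -/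

open scoped Classical Pointwise

namespace PaperSp

variable {V : Type} [AddCommGroup V] [Module ℝ V]

/-- The data of a reduced crystallographic root system in `V`:  a finite spanning set
`Phi` of nonzero vectors together with, for each root `α`, a linear functional
`pairing α = ⟨·, α∨⟩` taking the value `2` at `α`, such that the associated reflections
`s_α : β ↦ β − ⟨β, α∨⟩α` preserve `Phi`, all pairings are integral, and the only
multiples of a root `α` which are roots are `±α`. -/
structure RootSystemData (V : Type) [AddCommGroup V] [Module ℝ V] : Type where
  Phi : Set V
  pairing : V → V →ₗ[ℝ] ℝ
  pairing_self : ∀ α, α ∈ Phi → pairing α α = 2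
  finite : Phi.Finite
  span_top : Submodule.span ℝ Phi = ⊤
  zero_not_mem : (0 : V) ∉ Phi
  crystallographic : ∀ α ∈ Phi, ∀ β ∈ Phi, ∃ n : ℤ, pairing α β = (n : ℝ)
  reduced : ∀ α ∈ Phi, ∀ t : ℝ, t • α ∈ Phi → t = 1 ∨ t = -1
  reflect_mem : ∀ α ∈ Phi, ∀ β ∈ Phi, β - pairing α β • α ∈ Phi

/-- The reflection `s_α` associated to a root `α` (the identity if `α ∉ Φ`). -/
noncomputable def RootSystemData.refl (R : RootSystemData V) (α : V) : V ≃ₗ[ℝ] V :=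
  if h : α ∈ R.Phi then Module.reflection (R.pairing_self α h) else 1

/-- The set of reflections `{s_α : α ∈ K}` associated to a set `K` of roots. -/
noncomputable def refls (R : RootSystemData V) (K : Set V) : Set (V ≃ₗ[ℝ] V) :=
  {s | ∃ α ∈ K, s = R.refl α}

/-- The Weyl group `W`, generated by all reflections `s_α`, `α ∈ Φ`. -/
noncomputable def weylGroup (R : RootSystemData V) : Subgroup (V ≃ₗ[ℝ] V) :=
  Subgroup.closure (refls R R.Phi)

/-- The subgroup `W_J` generated by the reflections `s_α`, `α ∈ J`. -/
noncomputable def WsubJ (R : RootSystemData V) (J : Set V) : Subgroup (V ≃ₗ[ℝ] V) :=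
  Subgroup.closure (refls R J)

/-- The word length of `w` with respect to a generating set `S` of a group. -/
noncomputable def lengthWrt {G : Type*} [Group G] (S : Set G) (w : G) : ℕ :=
  sInf {n | ∃ ls : List G, ls.length = n ∧ (∀ x ∈ ls, x ∈ S) ∧ ls.prod = w}

/-- The length function `ℓ` on `W` with respect to the simple reflections
`S = {s_α : α ∈ Δ}`. -/
noncomputable def len (R : RootSystemData V) (Δ : Set V) (w : V ≃ₗ[ℝ] V) : ℕ :=
  lengthWrt (refls R Δ) w

/-- `Pos` and `Δ` form a positive system with base `Δ` for the root system `R`: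
`Φ = Pos ⊔ (−Pos)`, `Δ ⊆ Pos` is linearly independent, and every positive root is a
nonnegative integral combination of simple roots. -/
structure IsBase (R : RootSystemData V) (Pos Δ : Set V) : Prop where
  pos_sub : Pos ⊆ R.Phi
  mem_or_neg : ∀ α ∈ R.Phi, α ∈ Pos ∨ -α ∈ Pos
  not_both : ∀ α : V, ¬(α ∈ Pos ∧ -α ∈ Pos)
  delta_sub : Δ ⊆ Pos
  indep : LinearIndependent ℝ (fun a : Δ => (a : V))
  decomp : ∀ β ∈ Pos, ∃ c : V →₀ ℕ, (c.support : Set V) ⊆ Δ ∧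
    β = c.sum (fun a m => (m : ℝ) • a)

/-- The set `W^J = {w ∈ W : w(α) ∈ Φ⁺ for all α ∈ J}` of minimal length representatives
of `W/W_J`. -/
noncomputable def WupJ (R : RootSystemData V) (Pos : Set V) (J : Set V) :
    Set (V ≃ₗ[ℝ] V) :=
  {w | w ∈ weylGroup R ∧ ∀ α ∈ J, w α ∈ Pos}

/-- The set `V^J = W^J \ ⋃_{α ∈ Δ\J} W^{J∪{α}}`. -/
noncomputable def VupJ (R : RootSystemData V) (Pos Δ : Set V) (J : Set V) :
    Set (V ≃ₗ[ℝ] V) :=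
  {w | w ∈ WupJ R Pos J ∧ ∀ α ∈ Δ, α ∉ J → w ∉ WupJ R Pos (J ∪ {α})}

/-- `Φ_J(1) = Φ⁻ \ (Φ⁻ ∩ W_J·J)`. -/
noncomputable def PhiJone (R : RootSystemData V) (Pos : Set V) (J : Set V) : Set V :=
  (R.Phi \ Pos) \ {β | ∃ v ∈ WsubJ R J, ∃ α ∈ J, β = v α}

/-- `Φ_J(w) = w · Φ_J(1)`. -/
noncomputable def PhiJ (R : RootSystemData V) (Pos : Set V) (J : Set V)
    (w : V ≃ₗ[ℝ] V) : Set V :=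
  (fun x => w x) '' (PhiJone R Pos J)

/-- `hProjJ R Pos J pJ` says that `pJ` is the projection `w ↦ (w)^J` sending an element
of `W` to the unique element of `W^J` in the coset `w W_J`. -/
noncomputable def IsProjJ (R : RootSystemData V) (Pos : Set V) (J : Set V)
    (pJ : (V ≃ₗ[ℝ] V) → (V ≃ₗ[ℝ] V)) : Prop :=
  ∀ w ∈ weylGroup R, pJ w ∈ WupJ R Pos J ∧ (pJ w)⁻¹ * w ∈ WsubJ R J

/-- The product `s_i ⋯ s_1` of the first `i` members of a sequence in a group. -/
noncomputable def chainProd {G : Type*} [Group G] (s : ℕ → G) (i : ℕ) : G :=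
  (((List.range' 1 i).map s).reverse).prod

/-- The chain `w^(0) = w`, `w^(i) = (s_i ⋯ s_1 w)^J` associated to `w` and a sequence
of simple reflections. -/
noncomputable def chainElt {G : Type*} [Group G] (pJ : G → G) (s : ℕ → G) (w : G)
    (i : ℕ) : G :=
  if i = 0 then w else pJ (chainProd s i * w)

/-- The partial order `<_J`:  `w <_J w'` iff there are simple reflections
`s_1, …, s_r` (`r ≥ 1`) such that, with `w^(i) = (s_i ⋯ s_1 w)^J`, the lengths
`ℓ(w^(i))` are strictly increasing and `w^(r) = w'`.  Taking `pJ = id`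
(and `J = ∅`) gives the weak left order `<_∅`. -/
noncomputable def ltJ {G : Type*} [Group G] (S : Set G) (ℓ : G → ℕ) (pJ : G → G)
    (w w' : G) : Prop :=
  ∃ r : ℕ, 1 ≤ r ∧ ∃ s : ℕ → G,
    (∀ m, 1 ≤ m → m ≤ r → s m ∈ S) ∧
    (∀ m, 1 ≤ m → m ≤ r → ℓ (chainElt pJ s w (m - 1)) < ℓ (chainElt pJ s w m)) ∧
    chainElt pJ s w r = w'

/-- `w` is the longest element of a subgroup `H` of `W` (with respect to `ℓ`). -/
noncomputable def IsLongestIn (R : RootSystemData V) (Δ : Set V)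
    (H : Subgroup (V ≃ₗ[ℝ] V)) (w : V ≃ₗ[ℝ] V) : Prop :=
  w ∈ H ∧ ∀ v ∈ H, len R Δ v ≤ len R Δ w

end PaperSp

namespace PaperSp

variable {V : Type} [AddCommGroup V] [Module ℝ V]

/-- `parts` is the decomposition of the set `Δ` of simple roots into the (mutually
orthogonal, connected) sets of simple roots of the irreducible factors of `Φ`. -/
structure IsFactorDecomp (R : RootSystemData V) (Δ : Set V) {ι : Type}
    (parts : ι → Set V) : Prop where
  union_eq : (⋃ c, parts c) = Δ
  disj : ∀ c c', c ≠ c' → Disjoint (parts c) (parts c')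
  nonempty : ∀ c, (parts c).Nonempty
  ortho : ∀ c c', c ≠ c' → ∀ a ∈ parts c, ∀ b ∈ parts c', R.pairing a b = 0
  irred : ∀ c, ∀ A B : Set V, A ∪ B = parts c → A.Nonempty → B.Nonempty →
    (∀ a ∈ A, ∀ b ∈ B, R.pairing a b = 0) → False

/-- The roots of the irreducible factor with simple roots `parts c`:  the roots that are
integral combinations of the simple roots in `parts c`. -/
noncomputable def PhiFactor (R : RootSystemData V) {ι : Type} (parts : ι → Set V)
    (c : ι) : Set V :=
  {β | β ∈ R.Phi ∧ ∃ q : V →₀ ℤ, (q.support : Set V) ⊆ parts c ∧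
    β = q.sum (fun a m => (m : ℝ) • a)}

/-- Standard basis vector of `ℝ^k`. -/
noncomputable def eVec {k : ℕ} (i : Fin k) : Fin k → ℝ := fun j => if j = i then 1 else 0

/-- The canonical pairing `⟨β, α∨⟩ = 2(α,β)/(α,α)` of the standard root systems in
Euclidean space. -/
noncomputable def pairStd {k : ℕ} (α β : Fin k → ℝ) : ℝ :=
  2 * (∑ i, α i * β i) / (∑ i, α i * α i)

/-- The root system of type `A_m`: `{e_i − e_j : i ≠ j} ⊆ ℝ^{m+1}`. -/
noncomputable def stdA (m : ℕ) : Set (Fin (m + 1) → ℝ) :=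
  {v | ∃ i j : Fin (m + 1), i ≠ j ∧ v = eVec i - eVec j}

/-- The root system of type `D_m`: `{±e_i ± e_j : i ≠ j} ⊆ ℝ^m`. -/
noncomputable def stdD (m : ℕ) : Set (Fin m → ℝ) :=
  {v | ∃ i j : Fin m, i ≠ j ∧
    (v = eVec i + eVec j ∨ v = eVec i - eVec j ∨
     v = -eVec i + eVec j ∨ v = -eVec i - eVec j)}

/-- The root system of type `B_m`: `{±e_i} ∪ {±e_i ± e_j : i ≠ j} ⊆ ℝ^m`. -/
noncomputable def stdB (m : ℕ) : Set (Fin m → ℝ) :=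
  stdD m ∪ {v | ∃ i : Fin m, v = eVec i ∨ v = -eVec i}

/-- The root system of type `C_m`: `{±2e_i} ∪ {±e_i ± e_j : i ≠ j} ⊆ ℝ^m`. -/
noncomputable def stdC (m : ℕ) : Set (Fin m → ℝ) :=
  stdD m ∪ {v | ∃ i : Fin m, v = (2 : ℝ) • eVec i ∨ v = -((2 : ℝ) • eVec i)}

/-- `Φc` is isomorphic, as a root system, to the standard root system `Ψ ⊆ ℝ^k`:
there is a bijection `Φc → Ψ` preserving the canonical pairings. -/
noncomputable def factorIso {k : ℕ} (R : RootSystemData V) (Φc : Set V)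
    (Ψ : Set (Fin k → ℝ)) : Prop :=
  ∃ φ : V → (Fin k → ℝ), Set.BijOn φ Φc Ψ ∧
    ∀ α ∈ Φc, ∀ β ∈ Φc, pairStd (φ α) (φ β) = R.pairing α β

/-- Every irreducible factor of `Φ` is of classical type `A`, `B`, `C` or `D`. -/
noncomputable def NoExceptionalFactor (R : RootSystemData V) {ι : Type}
    (parts : ι → Set V) : Prop :=
  ∀ c : ι,
    (∃ m : ℕ, factorIso R (PhiFactor R parts c) (stdA m)) ∨
    (∃ m : ℕ, factorIso R (PhiFactor R parts c) (stdB m)) ∨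
    (∃ m : ℕ, factorIso R (PhiFactor R parts c) (stdC m)) ∨
    (∃ m : ℕ, factorIso R (PhiFactor R parts c) (stdD m))

/-- `hr c` is the highest root of the irreducible factor `c` and `hco c` is the
(finitely supported) family of its coefficients over the simple roots `parts c`. -/
structure IsHighestRootData (R : RootSystemData V) (Pos : Set V) {ι : Type}
    (parts : ι → Set V) (hr : ι → V) (hco : ι → (V →₀ ℕ)) : Prop where
  mem_pos : ∀ c, hr c ∈ Pos
  mem_factor : ∀ c, hr c ∈ PhiFactor R parts c
  coeff_supp : ∀ c, (((hco c).support : Set V)) ⊆ parts c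
  coeff_eq : ∀ c, hr c = (hco c).sum (fun a m => (m : ℝ) • a)
  highest : ∀ c, ∀ β ∈ PhiFactor R parts c, ∃ q : V →₀ ℕ,
    (q.support : Set V) ⊆ parts c ∧ hr c - β = q.sum (fun a m => (m : ℝ) • a)

/-- The longest element of a subgroup `H` of the Weyl group (chosen by choice). -/
noncomputable def longestElt (R : RootSystemData V) (Δ : Set V)
    (H : Subgroup (V ≃ₗ[ℝ] V)) : V ≃ₗ[ℝ] V :=
  Classical.epsilon (fun w => IsLongestIn R Δ H w)

/-- The subset `W_Ω` of `W` attached to the irreducible factor `c`: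
`{1} ∪ {w_{Δ^(i)} w_Δc : the coefficient of α_i in the highest root of the factor is 1}`,
where `w_{Δ^(i)}` is the longest element of the subgroup generated by the simple
reflections of the factor other than `s_{α_i}`, and `w_{Δc}` is the longest element of
the Weyl group of the factor. -/
noncomputable def OmegaSet (R : RootSystemData V) (Δ : Set V) {ι : Type}
    (parts : ι → Set V) (hco : ι → (V →₀ ℕ)) (c : ι) : Set (V ≃ₗ[ℝ] V) :=
  {u | u = 1 ∨ ∃ a ∈ parts c, hco c a = 1 ∧
    u = longestElt R Δ (WsubJ R (parts c \ {a})) * longestElt R Δ (WsubJ R (parts c))}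

/-- The subgroup `W_Ω ⊆ W`: the product of the subgroups `W_Ω` of the irreducible
factors. -/
noncomputable def WOmega (R : RootSystemData V) (Δ : Set V) {ι : Type}
    (parts : ι → Set V) (hco : ι → (V →₀ ℕ)) : Subgroup (V ≃ₗ[ℝ] V) :=
  Subgroup.closure (⋃ c, OmegaSet R Δ parts hco c)

end PaperSp

namespace PaperSp

/-!
Let `T` be the set of elements of `W` that can be reached from `w_0`, and let `F` be the sum of the
functionals `height ∘ w⁻¹` over `w ∈ T`. At a simple root `a`, the terms of `w` and `s_a w` cancel
when both lie in `T`; since `T` is an upper set for the weak left order, the remaining terms are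
negative. Hence `F` is nonpositive on the simple roots, and `F a = 0` only if `s_a T = T`.

Let `a` be a simple root of a factor with base `Γ`, and suppose that its coefficient in the highest
root `α₀` of the factor is `1`. As `T` is stable under `u = w_{Γ∖a} w_Γ ∈ W_Ω`, so is `F`, that is,
`F α₀ = F (u⁻¹ α₀)`. The root `w_{Γ∖a} α₀` is positive, because its coefficient at `a` is still `1`,
and `w_Γ` makes it negative, so `F α₀ ≥ 0`. All coefficients of `α₀` are positive, hence `F`
vanishes on `Γ`. If this applies to every factor, then `T` is stable under `W`, hence equal to `W`.

In the classical types such a simple root exists: a coordinate functional (in type `C`, half the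
sum of the coordinates) takes only the values `0` and `±1` on the roots. A dominant Weyl conjugate
of it takes the value `1` at some simple root `a`, whose coefficient in `α₀` is therefore `1`.
-/

section

variable {V : Type} [AddCommGroup V] [Module ℝ V]

namespace RootSystemData

variable (R : RootSystemData V) {α β : V}

theorem refl_eq_reflection (hα : α ∈ R.Phi) :
    R.refl α = Module.reflection (R.pairing_self α hα) :=
  dif_pos hα

theorem refl_apply (hα : α ∈ R.Phi) (x : V) : R.refl α x = x - R.pairing α x • α := by
  rw [R.refl_eq_reflection hα, Module.reflection_apply]

theorem refl_apply_self (hα : α ∈ R.Phi) : R.refl α α = -α := by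
  rw [R.refl_eq_reflection hα, Module.reflection_apply_self]

theorem refl_refl (hα : α ∈ R.Phi) (x : V) : R.refl α (R.refl α x) = x := by
  rw [R.refl_eq_reflection hα, Module.involutive_reflection]

theorem refl_mul_self (hα : α ∈ R.Phi) : R.refl α * R.refl α = 1 :=
  LinearEquiv.ext (R.refl_refl hα)

theorem refl_mul_cancel_left (hα : α ∈ R.Phi) (w : V ≃ₗ[ℝ] V) :
    R.refl α * (R.refl α * w) = w := by
  rw [← mul_assoc, R.refl_mul_self hα, one_mul]

theorem refl_inv (hα : α ∈ R.Phi) : (R.refl α)⁻¹ = R.refl α :=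
  inv_eq_of_mul_eq_one_left (R.refl_mul_self hα)

theorem refl_mul_inv_apply_self (hα : α ∈ R.Phi) (w : V ≃ₗ[ℝ] V) :
    (R.refl α * w)⁻¹ α = -(w⁻¹ α) := by
  rw [mul_inv_rev, R.refl_inv hα, LinearEquiv.mul_apply, R.refl_apply_self hα, map_neg]

theorem refl_mem (hα : α ∈ R.Phi) (hβ : β ∈ R.Phi) : R.refl α β ∈ R.Phi := by
  rw [R.refl_apply hα]
  exact R.reflect_mem α hα β hβ

theorem neg_mem (hα : α ∈ R.Phi) : -α ∈ R.Phi := by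
  rw [← R.refl_apply_self hα]
  exact R.refl_mem hα hα

theorem pairing_refl (hα : α ∈ R.Phi) (hβ : β ∈ R.Phi) (x : V) :
    R.pairing (R.refl β α) x = R.pairing α (R.refl β x) := by
  have hγ : R.refl β α ∈ R.Phi := R.refl_mem hβ hα
  -- Both functionals define a reflection in the root `s_β α` that preserves the finite set `Φ`.
  have heq : R.pairing (R.refl β α) = R.pairing α ∘ₗ (R.refl β).toLinearMap := by
    refine Module.Dual.eq_of_preReflection_mapsTo (x := R.refl β α) R.finite R.span_top
      (R.pairing_self _ hγ) (R.reflect_mem _ hγ) ?_ fun y hy => ?_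
    · rw [LinearMap.comp_apply, LinearEquiv.coe_coe, R.refl_refl hβ, R.pairing_self α hα]
    · have hconj := R.refl_mem hβ (R.refl_mem hα (R.refl_mem hβ hy))
      rwa [R.refl_apply hα, map_sub, R.refl_refl hβ, map_smul] at hconj
  rw [heq, LinearMap.comp_apply, LinearEquiv.coe_coe]

theorem refl_mul_refl_refl (hα : α ∈ R.Phi) (hβ : β ∈ R.Phi) :
    R.refl β * R.refl (R.refl β α) = R.refl α * R.refl β := by
  ext x
  rw [LinearEquiv.mul_apply, LinearEquiv.mul_apply, R.refl_apply (R.refl_mem hβ hα),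
    R.refl_apply hα, map_sub, map_smul, R.refl_refl hβ, R.pairing_refl hα hβ]

theorem refl_neg (hα : α ∈ R.Phi) : R.refl (-α) = R.refl α := by
  have h := R.refl_mul_refl_refl hα hα
  rwa [R.refl_apply_self hα, mul_left_cancel_iff] at h

end RootSystemData

section WsubJ

variable {R : RootSystemData V} {J K : Set V} {w : V ≃ₗ[ℝ] V}

theorem WsubJ_mono (h : J ⊆ K) : WsubJ R J ≤ WsubJ R K :=
  Subgroup.closure_mono fun _ ⟨a, ha, hs⟩ => ⟨a, h ha, hs⟩

theorem refl_mem_WsubJ {a : V} (ha : a ∈ J) : R.refl a ∈ WsubJ R J :=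
  Subgroup.subset_closure ⟨a, ha, rfl⟩

theorem WsubJ_induction_left (hJ : J ⊆ R.Phi) {p : (V ≃ₗ[ℝ] V) → Prop} (one : p 1)
    (refl_mul : ∀ a ∈ J, ∀ w, p w → p (R.refl a * w)) (hw : w ∈ WsubJ R J) : p w := by
  unfold WsubJ at hw
  induction hw using Subgroup.closure_induction_left with
  | one => exact one
  | mul_left _ hs w _ ih =>
    obtain ⟨a, ha, rfl⟩ := hs
    exact refl_mul a ha w ih
  | inv_mul_cancel _ hs w _ ih =>
    obtain ⟨a, ha, rfl⟩ := hs
    rw [R.refl_inv (hJ ha)]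
    exact refl_mul a ha w ih

theorem apply_mem_of_mem_WsubJ (hJ : J ⊆ R.Phi) {S : Set V}
    (hS : ∀ a ∈ J, ∀ x ∈ S, R.refl a x ∈ S) (hw : w ∈ WsubJ R J) {x : V} (hx : x ∈ S) :
    w x ∈ S :=
  WsubJ_induction_left (p := fun w => w x ∈ S) hJ hx (fun a ha w hw => hS a ha (w x) hw) hw

theorem apply_mem_Phi (hw : w ∈ weylGroup R) {β : V} (hβ : β ∈ R.Phi) : w β ∈ R.Phi :=
  apply_mem_of_mem_WsubJ subset_rfl (fun _ ha _ hx => R.refl_mem ha hx) hw hβ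

theorem finite_weylGroup (R : RootSystemData V) : (weylGroup R : Set (V ≃ₗ[ℝ] V)).Finite := by
  have : Finite R.Phi := R.finite
  let restrict : weylGroup R → R.Phi → R.Phi := fun w β => ⟨w.1 β, apply_mem_Phi w.2 β.2⟩
  have hinj : Function.Injective restrict := fun w w' h =>
    Subtype.ext <| LinearEquiv.toLinearMap_injective <| LinearMap.ext_on R.span_top fun β hβ =>
      congrArg Subtype.val (congrFun h ⟨β, hβ⟩)
  have := Finite.of_injective restrict hinj
  exact Set.toFinite _

end WsubJ

namespace IsBase

variable {R : RootSystemData V} {Pos Δ J : Set V} {a β : V} {w : V ≃ₗ[ℝ] V}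

theorem delta_subset_Phi (hB : IsBase R Pos Δ) : Δ ⊆ R.Phi :=
  hB.delta_sub.trans hB.pos_sub

theorem finite_pos (hB : IsBase R Pos Δ) : Pos.Finite :=
  R.finite.subset hB.pos_sub

theorem apply_nonneg (hB : IsBase R Pos Δ) {f : V →ₗ[ℝ] ℝ} (hf : ∀ a ∈ Δ, 0 ≤ f a)
    (hβ : β ∈ Pos) : 0 ≤ f β := by
  obtain ⟨c, hc, rfl⟩ := hB.decomp β hβ
  simp only [map_finsuppSum, map_smul, smul_eq_mul]
  exact Finset.sum_nonneg fun a ha => mul_nonneg (Nat.cast_nonneg _) (hf a (hc ha))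

theorem apply_pos (hB : IsBase R Pos Δ) {f : V →ₗ[ℝ] ℝ} (hf : ∀ a ∈ Δ, 0 < f a)
    (hβ : β ∈ Pos) : 0 < f β := by
  obtain ⟨c, hc, rfl⟩ := hB.decomp β hβ
  have hne : c ≠ 0 := by
    rintro rfl
    exact R.zero_not_mem (hB.pos_sub hβ)
  simp only [map_finsuppSum, map_smul, smul_eq_mul]
  refine Finset.sum_pos (fun a ha => mul_pos ?_ (hf a (hc ha))) (Finsupp.support_nonempty_iff.2 hne)
  exact Nat.cast_pos.2 (Nat.pos_of_ne_zero (Finsupp.mem_support_iff.1 ha))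

theorem mem_pos_of_apply_pos (hB : IsBase R Pos Δ) {f : V →ₗ[ℝ] ℝ} (hf : ∀ a ∈ Δ, 0 ≤ f a)
    (hβ : β ∈ R.Phi) (h : 0 < f β) : β ∈ Pos := by
  refine (hB.mem_or_neg β hβ).resolve_right fun hneg => ?_
  have := hB.apply_nonneg hf hneg
  rw [map_neg] at this
  linarith

theorem exists_dual_eqOn (hB : IsBase R Pos Δ) (h : V → ℝ) :
    ∃ f : V →ₗ[ℝ] ℝ, Set.EqOn f h Δ := by
  have hli : LinearIndepOn ℝ id Δ := hB.indep
  let b := Module.Basis.extend hli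
  refine ⟨b.constr ℝ fun x => h x, fun a ha => ?_⟩
  let a' : hli.extend (Set.subset_univ Δ) := ⟨a, hli.subset_extend _ ha⟩
  have hba : b a' = a := Module.Basis.extend_apply_self hli a'
  have hconstr := b.constr_basis ℝ (fun x => h x) a'
  rwa [hba] at hconstr

theorem apply_nonneg_of_mem_span (hB : IsBase R Pos Δ) (hJ : J ⊆ Δ) {f : V →ₗ[ℝ] ℝ}
    (hf : ∀ a ∈ J, 0 ≤ f a) (hβ : β ∈ Pos) (hβJ : β ∈ Submodule.span ℝ J) : 0 ≤ f β := by
  -- Replace `f` by the functional that agrees with it on `J` and vanishes on `Δ \ J`.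
  obtain ⟨g, hg⟩ := hB.exists_dual_eqOn (J.indicator f)
  have hgf : Set.EqOn g f J := fun a ha => by rw [hg (hJ ha), Set.indicator_of_mem ha]
  rw [← LinearMap.eqOn_span hgf hβJ]
  refine hB.apply_nonneg (fun a ha => ?_) hβ
  rw [hg ha]
  exact Set.indicator_nonneg hf a

/-- The height: the functional with value `1` at every simple root. -/
noncomputable def height (hB : IsBase R Pos Δ) : V →ₗ[ℝ] ℝ :=
  (hB.exists_dual_eqOn 1).choose

theorem height_pos (hB : IsBase R Pos Δ) (hβ : β ∈ Pos) : 0 < hB.height β := by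
  refine hB.apply_pos (fun a ha => ?_) hβ
  rw [height, (hB.exists_dual_eqOn 1).choose_spec ha]
  exact one_pos

/-- The fundamental coweight `ε_a`, with value `1` at the simple root `a` and `0` at every other
simple root. -/
noncomputable def coweight (hB : IsBase R Pos Δ) (a : V) : V →ₗ[ℝ] ℝ :=
  (hB.exists_dual_eqOn (Pi.single a 1)).choose

theorem coweight_apply_self (hB : IsBase R Pos Δ) (ha : a ∈ Δ) : hB.coweight a a = 1 := by
  rw [coweight, (hB.exists_dual_eqOn (Pi.single a 1)).choose_spec ha, Pi.single_eq_same]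

theorem coweight_apply_of_ne (hB : IsBase R Pos Δ) {b : V} (hb : b ∈ Δ) (hba : b ≠ a) :
    hB.coweight a b = 0 := by
  rw [coweight, (hB.exists_dual_eqOn (Pi.single a 1)).choose_spec hb, Pi.single_eq_of_ne hba]

theorem coweight_apply_nonneg (hB : IsBase R Pos Δ) {b : V} (hb : b ∈ Δ) :
    0 ≤ hB.coweight a b := by
  rcases eq_or_ne b a with rfl | hba
  · exact (hB.coweight_apply_self hb).symm ▸ zero_le_one
  · exact (hB.coweight_apply_of_ne hb hba).ge

theorem coweight_apply_sum (hB : IsBase R Pos Δ) (ha : a ∈ Δ) {c : V →₀ ℕ}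
    (hc : (c.support : Set V) ⊆ Δ) :
    hB.coweight a (c.sum fun b m => (m : ℝ) • b) = c a := by
  simp only [map_finsuppSum, map_smul, smul_eq_mul]
  rw [Finsupp.sum_eq_single a, hB.coweight_apply_self ha, mul_one]
  · intro b hb hba
    rw [hB.coweight_apply_of_ne (hc (Finsupp.mem_support_iff.2 hb)) hba, mul_zero]
  · intro _
    rw [Nat.cast_zero, zero_mul]

theorem coweight_refl (hB : IsBase R Pos Δ) {b : V} (hb : b ∈ Δ) (hba : b ≠ a) (x : V) :
    hB.coweight a (R.refl b x) = hB.coweight a x := by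
  rw [R.refl_apply (hB.delta_subset_Phi hb), map_sub, map_smul, hB.coweight_apply_of_ne hb hba,
    smul_zero, sub_zero]

theorem coweight_apply_of_mem_WsubJ (hB : IsBase R Pos Δ) (hJ : J ⊆ Δ) (haJ : a ∉ J)
    (hw : w ∈ WsubJ R J) (x : V) : hB.coweight a (w x) = hB.coweight a x :=
  apply_mem_of_mem_WsubJ (S := {y | hB.coweight a y = hB.coweight a x})
    (hJ.trans hB.delta_subset_Phi)
    (fun _ hb y hy => (hB.coweight_refl (hJ hb) (ne_of_mem_of_not_mem hb haJ) y).trans hy) hw rfl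

theorem refl_mem_pos (hB : IsBase R Pos Δ) (ha : a ∈ Δ) (hβ : β ∈ Pos) (hne : β ≠ a) :
    R.refl a β ∈ Pos := by
  have haΦ := hB.delta_subset_Phi ha
  refine (hB.mem_or_neg _ (R.refl_mem haΦ (hB.pos_sub hβ))).resolve_right fun hneg => hne ?_
  obtain ⟨c, hc, hsum⟩ := hB.decomp β hβ
  have hcoeff : ∀ b ∈ Δ, b ≠ a → c b = 0 := by
    intro b hb hba
    have h := hB.apply_nonneg (fun _ => hB.coweight_apply_nonneg (a := b)) hneg
    rw [map_neg, hB.coweight_refl ha hba.symm, hsum, hB.coweight_apply_sum hb hc] at h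
    exact Nat.cast_eq_zero.1 (le_antisymm (neg_nonneg.1 h) (Nat.cast_nonneg (α := ℝ) _))
  have hmul : β = (c a : ℝ) • a := by
    rw [hsum]
    refine Finsupp.sum_eq_single a (fun b hb hba => ?_) fun _ => by rw [Nat.cast_zero, zero_smul]
    exact absurd (hcoeff b (hc (Finsupp.mem_support_iff.2 hb)) hba) hb
  rcases R.reduced a haΦ (c a) (hmul ▸ hB.pos_sub hβ) with h | h
  · rw [hmul, h, one_smul]
  · linarith [Nat.cast_nonneg (α := ℝ) (c a)]

/-- Twice the Weyl vector: the sum of all positive roots. -/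
noncomputable def twoRho (hB : IsBase R Pos Δ) : V := ∑ β ∈ hB.finite_pos.toFinset, β

theorem refl_twoRho (hB : IsBase R Pos Δ) (ha : a ∈ Δ) :
    R.refl a hB.twoRho = hB.twoRho - (2 : ℝ) • a := by
  have haΦ := hB.delta_subset_Phi ha
  have haPos : a ∈ hB.finite_pos.toFinset := hB.finite_pos.mem_toFinset.2 (hB.delta_sub ha)
  have hmaps : ∀ β ∈ hB.finite_pos.toFinset.erase a,
      R.refl a β ∈ hB.finite_pos.toFinset.erase a := by
    intro β hβ
    simp only [Finset.mem_erase, Set.Finite.mem_toFinset] at hβ ⊢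
    refine ⟨fun h => hB.not_both a ⟨hB.delta_sub ha, ?_⟩, hB.refl_mem_pos ha hβ.2 hβ.1⟩
    have hneg : β = -a := by rw [← R.refl_refl haΦ β, h, R.refl_apply_self haΦ]
    exact hneg ▸ hβ.2
  have hperm : ∑ β ∈ hB.finite_pos.toFinset.erase a, R.refl a β =
      ∑ β ∈ hB.finite_pos.toFinset.erase a, β :=
    Finset.sum_nbij' (R.refl a) (R.refl a) hmaps hmaps (fun β _ => R.refl_refl haΦ β)
      (fun β _ => R.refl_refl haΦ β) fun _ _ => rfl
  rw [twoRho, map_sum, ← Finset.add_sum_erase _ _ haPos, ← Finset.add_sum_erase _ _ haPos, hperm,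
    R.refl_apply_self haΦ]
  module

theorem finite_WsubJ (hB : IsBase R Pos Δ) (hJ : J ⊆ Δ) :
    (WsubJ R J : Set (V ≃ₗ[ℝ] V)).Finite :=
  (finite_weylGroup R).subset (WsubJ_mono (hJ.trans hB.delta_subset_Phi))

theorem exists_mem_WsubJ_forall_apply_nonneg (hB : IsBase R Pos Δ) (hJ : J ⊆ Δ)
    (f : V →ₗ[ℝ] ℝ) : ∃ w ∈ WsubJ R J, ∀ a ∈ J, 0 ≤ f (w a) := by
  obtain ⟨w, hw, hmax⟩ :=
    Set.exists_max_image _ (fun w => f (w hB.twoRho)) (hB.finite_WsubJ hJ) ⟨1, one_mem _⟩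
  refine ⟨w, hw, fun a ha => ?_⟩
  have h := hmax (w * R.refl a) (mul_mem hw (refl_mem_WsubJ ha))
  rw [LinearEquiv.mul_apply, hB.refl_twoRho (hJ ha), map_sub, map_sub, map_smul, map_smul,
    smul_eq_mul] at h
  linarith

theorem exists_word (hB : IsBase R Pos Δ) (hw : w ∈ WsubJ R Δ) :
    ∃ l : List (V ≃ₗ[ℝ] V), (∀ s ∈ l, s ∈ refls R Δ) ∧ l.prod = w := by
  refine WsubJ_induction_left
    (p := fun w => ∃ l : List (V ≃ₗ[ℝ] V), (∀ s ∈ l, s ∈ refls R Δ) ∧ l.prod = w)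
    hB.delta_subset_Phi ⟨[], List.forall_mem_nil _, rfl⟩ ?_ hw
  rintro a ha _ ⟨l, hl, rfl⟩
  exact ⟨R.refl a :: l, List.forall_mem_cons.2 ⟨⟨a, ha, rfl⟩, hl⟩, List.prod_cons⟩

theorem exists_word_length_eq_len (hB : IsBase R Pos Δ) (hw : w ∈ WsubJ R Δ) :
    ∃ l : List (V ≃ₗ[ℝ] V), l.length = len R Δ w ∧ (∀ s ∈ l, s ∈ refls R Δ) ∧ l.prod = w := by
  obtain ⟨l, hl, hprod⟩ := hB.exists_word hw
  exact Nat.sInf_mem (s := {n | ∃ l : List (V ≃ₗ[ℝ] V), l.length = n ∧ _}) ⟨_, l, rfl, hl, hprod⟩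

theorem exists_word_refl_mul (hB : IsBase R Pos Δ) {l : List (V ≃ₗ[ℝ] V)}
    (hl : ∀ s ∈ l, s ∈ refls R Δ) (hβ : β ∈ Pos) (hneg : -(l.prod⁻¹ β) ∈ Pos) :
    ∃ l' : List (V ≃ₗ[ℝ] V), l'.length + 1 = l.length ∧ (∀ s ∈ l', s ∈ refls R Δ) ∧
      l'.prod = R.refl β * l.prod := by
  induction l generalizing β with
  | nil => exact absurd ⟨hβ, hneg⟩ (hB.not_both β)
  | cons s t ih =>
    obtain ⟨⟨b, hb, rfl⟩, ht⟩ := List.forall_mem_cons.1 hl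
    have hbΦ := hB.delta_subset_Phi hb
    rw [List.prod_cons] at hneg ⊢
    rcases eq_or_ne β b with rfl | hβb
    · exact ⟨t, rfl, ht, (R.refl_mul_cancel_left hbΦ _).symm⟩
    · rw [mul_inv_rev, R.refl_inv hbΦ] at hneg
      obtain ⟨t', hlen, ht', hprod⟩ := ih ht (hB.refl_mem_pos hb hβ hβb) hneg
      refine ⟨R.refl b :: t', congrArg (· + 1) hlen,
        List.forall_mem_cons.2 ⟨⟨b, hb, rfl⟩, ht'⟩, ?_⟩
      rw [List.prod_cons, hprod, ← mul_assoc, R.refl_mul_refl_refl (hB.pos_sub hβ) hbΦ, mul_assoc]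

theorem len_refl_mul_lt (hB : IsBase R Pos Δ) (hw : w ∈ WsubJ R Δ) (hβ : β ∈ Pos)
    (hneg : -(w⁻¹ β) ∈ Pos) : len R Δ (R.refl β * w) < len R Δ w := by
  obtain ⟨l, hlen, hl, rfl⟩ := hB.exists_word_length_eq_len hw
  obtain ⟨l', hlen', hl', hprod⟩ := hB.exists_word_refl_mul hl hβ hneg
  have hle : len R Δ (R.refl β * l.prod) ≤ l'.length := Nat.sInf_le ⟨l', rfl, hl', hprod⟩
  omega

theorem len_lt_len_refl_mul (hB : IsBase R Pos Δ) (hw : w ∈ WsubJ R Δ) (ha : a ∈ Δ)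
    (hpos : w⁻¹ a ∈ Pos) : len R Δ w < len R Δ (R.refl a * w) := by
  have haΦ := hB.delta_subset_Phi ha
  have hlt := hB.len_refl_mul_lt (mul_mem (refl_mem_WsubJ ha) hw) (hB.delta_sub ha) <| by
    rwa [R.refl_mul_inv_apply_self haΦ, neg_neg]
  rwa [R.refl_mul_cancel_left haΦ] at hlt

theorem isLongestIn_longestElt (hB : IsBase R Pos Δ) (hJ : J ⊆ Δ) :
    IsLongestIn R Δ (WsubJ R J) (longestElt R Δ (WsubJ R J)) := by
  obtain ⟨w, hw, hmax⟩ := Set.exists_max_image _ (len R Δ) (hB.finite_WsubJ hJ) ⟨1, one_mem _⟩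
  exact Classical.epsilon_spec (p := IsLongestIn R Δ (WsubJ R J)) ⟨w, hw, hmax⟩

theorem neg_longestElt_inv_apply_mem_pos (hB : IsBase R Pos Δ) (hJ : J ⊆ Δ) (ha : a ∈ J) :
    -((longestElt R Δ (WsubJ R J))⁻¹ a) ∈ Pos := by
  obtain ⟨hw, hmax⟩ := hB.isLongestIn_longestElt hJ
  have hmem := apply_mem_Phi (WsubJ_mono (hJ.trans hB.delta_subset_Phi) (inv_mem hw))
    (hB.delta_subset_Phi (hJ ha))
  refine (hB.mem_or_neg _ hmem).resolve_left fun hpos => ?_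
  exact (hB.len_lt_len_refl_mul (WsubJ_mono hJ hw) (hJ ha) hpos).not_ge
    (hmax _ (mul_mem (refl_mem_WsubJ ha) hw))

theorem refl_mem_WsubJ_of_mem_pos (hB : IsBase R Pos Δ) (hβ : β ∈ Pos) :
    R.refl β ∈ WsubJ R Δ := by
  set w := longestElt R Δ (WsubJ R Δ)
  have hw : w ∈ WsubJ R Δ := (hB.isLongestIn_longestElt subset_rfl).1
  have hneg : -(w⁻¹ β) ∈ Pos := by
    refine hB.mem_pos_of_apply_pos (fun a ha => (hB.height_pos (hB.delta_sub ha)).le)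
      (R.neg_mem (apply_mem_Phi (WsubJ_mono hB.delta_subset_Phi (inv_mem hw)) (hB.pos_sub hβ))) ?_
    refine hB.apply_pos (f := hB.height ∘ₗ (-(w⁻¹ : V ≃ₗ[ℝ] V).toLinearMap)) (fun a ha => ?_) hβ
    exact hB.height_pos (hB.neg_longestElt_inv_apply_mem_pos subset_rfl ha)
  -- The exchange condition, applied to a word for the longest element, gives a word for `s_β w`.
  obtain ⟨l, hl, hlw⟩ := hB.exists_word hw
  obtain ⟨l', -, hl', hprod⟩ := hB.exists_word_refl_mul hl hβ (hlw.symm ▸ hneg)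
  have hmem : l'.prod ∈ WsubJ R Δ :=
    Subgroup.list_prod_mem _ fun s hs => Subgroup.subset_closure (hl' s hs)
  rw [hprod, hlw] at hmem
  exact (Subgroup.mul_mem_cancel_right _ hw).1 hmem

theorem weylGroup_eq_WsubJ (hB : IsBase R Pos Δ) : weylGroup R = WsubJ R Δ := by
  refine le_antisymm ((Subgroup.closure_le _).2 ?_) (WsubJ_mono hB.delta_subset_Phi)
  rintro _ ⟨β, hβ, rfl⟩
  rcases hB.mem_or_neg β hβ with hpos | hneg
  · exact hB.refl_mem_WsubJ_of_mem_pos hpos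
  · exact R.refl_neg hβ ▸ hB.refl_mem_WsubJ_of_mem_pos hneg

theorem ltJ_refl_mul (hB : IsBase R Pos Δ) (hw : w ∈ weylGroup R) (ha : a ∈ Δ)
    (hpos : w⁻¹ a ∈ Pos) : ltJ (refls R Δ) (len R Δ) id w (R.refl a * w) := by
  have hchain : chainElt id (fun _ => R.refl a) w 1 = R.refl a * w := by
    simp [chainElt, chainProd]
  refine ⟨1, le_rfl, fun _ => R.refl a, fun _ _ _ => ⟨a, ha, rfl⟩, fun m hm1 hm2 => ?_, hchain⟩
  obtain rfl : m = 1 := le_antisymm hm2 hm1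
  rw [hchain]
  exact hB.len_lt_len_refl_mul (hB.weylGroup_eq_WsubJ ▸ hw) ha hpos

end IsBase

section PhiFactor

variable {R : RootSystemData V} {Pos Δ : Set V} {ι : Type} {parts : ι → Set V} {c : ι} {a β : V}
  {w : V ≃ₗ[ℝ] V} {f : V →ₗ[ℝ] ℝ}

theorem mem_PhiFactor (ha : a ∈ parts c) (haΦ : a ∈ R.Phi) : a ∈ PhiFactor R parts c := by
  refine ⟨haΦ, Finsupp.single a 1, ?_, ?_⟩
  · exact (Finset.coe_subset.2 Finsupp.support_single_subset).trans <| by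
      rwa [Finset.coe_singleton, Set.singleton_subset_iff]
  · rw [Finsupp.sum_single_index (by rw [Int.cast_zero, zero_smul]), Int.cast_one, one_smul]

theorem PhiFactor_subset_span : PhiFactor R parts c ⊆ Submodule.span ℝ (parts c) := by
  rintro _ ⟨-, q, hq, rfl⟩
  exact Submodule.sum_mem _ fun b hb => Submodule.smul_mem _ _ (Submodule.subset_span (hq hb))

theorem refl_mem_PhiFactor (ha : a ∈ parts c) (haΦ : a ∈ R.Phi) (hβ : β ∈ PhiFactor R parts c) :
    R.refl a β ∈ PhiFactor R parts c := by
  obtain ⟨hβΦ, q, hq, hsum⟩ := hβ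
  obtain ⟨n, hn⟩ := R.crystallographic a haΦ β hβΦ
  refine ⟨R.refl_mem haΦ hβΦ, q - Finsupp.single a n, fun b hb => ?_, ?_⟩
  · by_contra hbc
    have hba : b ≠ a := fun h => hbc (h ▸ ha)
    have hqb : q b = 0 := Finsupp.notMem_support_iff.1 fun h => hbc (hq h)
    simp [hqb, hba] at hb
  · rw [Finsupp.sum_sub_index fun b m m' => by rw [Int.cast_sub, sub_smul],
      Finsupp.sum_single_index (by rw [Int.cast_zero, zero_smul]), ← hsum, R.refl_apply haΦ, hn]

theorem apply_mem_PhiFactor (hΦ : parts c ⊆ R.Phi) (hw : w ∈ WsubJ R (parts c))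
    (hβ : β ∈ PhiFactor R parts c) : w β ∈ PhiFactor R parts c :=
  apply_mem_of_mem_WsubJ hΦ (fun _ ha _ hx => refl_mem_PhiFactor ha (hΦ ha) hx) hw hβ

namespace IsHighestRootData

variable {hr : ι → V} {hco : ι → (V →₀ ℕ)}

theorem apply_le (hhr : IsHighestRootData R Pos parts hr hco) (hf : ∀ a ∈ parts c, 0 ≤ f a)
    (hβ : β ∈ PhiFactor R parts c) : f β ≤ f (hr c) := by
  obtain ⟨q, hq, hsum⟩ := hhr.highest c β hβ
  rw [← sub_nonneg, ← map_sub, hsum]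
  simp only [map_finsuppSum, map_smul, smul_eq_mul]
  exact Finset.sum_nonneg fun a ha => mul_nonneg (Nat.cast_nonneg _) (hf a (hq ha))

theorem coweight_apply_hr (hhr : IsHighestRootData R Pos parts hr hco) (hB : IsBase R Pos Δ)
    (hΔ : parts c ⊆ Δ) (ha : a ∈ parts c) : hB.coweight a (hr c) = hco c a := by
  rw [hhr.coeff_eq, hB.coweight_apply_sum (hΔ ha) ((hhr.coeff_supp c).trans hΔ)]

end IsHighestRootData

end PhiFactor

/-- `f` is minuscule on `S`: it takes values in `{-1, 0, 1}` on `S` and is not identically zero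
there. On an irreducible root system, the dominant minuscule functionals are the fundamental
coweights at the simple roots with coefficient `1` in the highest root. -/
structure IsMinuscule {α : Type*} (f : α → ℝ) (S : Set α) : Prop where
  apply_mem : ∀ x ∈ S, f x ∈ ({-1, 0, 1} : Set ℝ)
  exists_ne_zero : ∃ x ∈ S, f x ≠ 0

namespace IsMinuscule

variable {R : RootSystemData V} {Pos Δ : Set V} {ι : Type} {parts : ι → Set V} {c : ι}
  {f : V →ₗ[ℝ] ℝ}

theorem apply_le_one {α : Type*} {g : α → ℝ} {S : Set α} (hg : IsMinuscule g S) {x : α}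
    (hx : x ∈ S) : g x ≤ 1 := by
  rcases hg.apply_mem x hx with h | h | h <;> rw [h] <;> norm_num

theorem comp_mem_WsubJ (hf : IsMinuscule f (PhiFactor R parts c)) (hΦ : parts c ⊆ R.Phi)
    {w : V ≃ₗ[ℝ] V} (hw : w ∈ WsubJ R (parts c)) :
    IsMinuscule (f ∘ₗ w.toLinearMap) (PhiFactor R parts c) := by
  obtain ⟨β, hβ, hne⟩ := hf.exists_ne_zero
  refine ⟨fun x hx => hf.apply_mem _ (apply_mem_PhiFactor hΦ hw hx),
    w⁻¹ β, apply_mem_PhiFactor hΦ (inv_mem hw) hβ, ?_⟩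
  rwa [LinearMap.comp_apply, LinearEquiv.coe_coe, ← LinearEquiv.mul_apply, mul_inv_cancel]

theorem exists_apply_eq_one (hf : IsMinuscule f (PhiFactor R parts c)) (hΦ : parts c ⊆ R.Phi)
    (hdom : ∀ a ∈ parts c, 0 ≤ f a) : ∃ a ∈ parts c, f a = 1 := by
  by_contra! hne
  have hzero : Set.EqOn f (0 : V →ₗ[ℝ] ℝ) (parts c) := by
    intro a ha
    rcases hf.apply_mem a (mem_PhiFactor ha (hΦ ha)) with h | h | h
    · linarith [hdom a ha]
    · exact h
    · exact absurd h (hne a ha)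
  obtain ⟨β, hβ, hβne⟩ := hf.exists_ne_zero
  exact hβne (LinearMap.eqOn_span hzero (PhiFactor_subset_span hβ))

theorem exists_coeff_eq_one (hf : IsMinuscule f (PhiFactor R parts c)) (hB : IsBase R Pos Δ)
    (hΔ : parts c ⊆ Δ) {hr : ι → V} {hco : ι → (V →₀ ℕ)}
    (hhr : IsHighestRootData R Pos parts hr hco) : ∃ a ∈ parts c, hco c a = 1 := by
  have hΦ := hΔ.trans hB.delta_subset_Phi
  obtain ⟨w, hw, hdom⟩ := hB.exists_mem_WsubJ_forall_apply_nonneg hΔ f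
  have hfw := hf.comp_mem_WsubJ hΦ hw
  set g : V →ₗ[ℝ] ℝ := f ∘ₗ w.toLinearMap
  obtain ⟨a, ha, hga⟩ := hfw.exists_apply_eq_one hΦ hdom
  have hone_le : 1 ≤ hB.coweight a (hr c) := by
    rw [← hB.coweight_apply_self (hΔ ha)]
    exact hhr.apply_le (fun b hb => hB.coweight_apply_nonneg (hΔ hb)) (mem_PhiFactor ha (hΦ ha))
  have hle : hB.coweight a (hr c) ≤ g (hr c) := by
    rw [← sub_nonneg, ← LinearMap.sub_apply]
    refine hB.apply_nonneg_of_mem_span hΔ (fun b hb => ?_) (hhr.mem_pos c)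
      (PhiFactor_subset_span (hhr.mem_factor c))
    rw [LinearMap.sub_apply, sub_nonneg]
    rcases eq_or_ne b a with rfl | hba
    · rw [hB.coweight_apply_self (hΔ ha), hga]
    · exact (hB.coweight_apply_of_ne (hΔ hb) hba).trans_le (hdom b hb)
  have heq := le_antisymm (hle.trans (hfw.apply_le_one (hhr.mem_factor c))) hone_le
  rw [hhr.coweight_apply_hr hB hΔ ha] at heq
  exact ⟨a, ha, Nat.cast_eq_one.1 heq⟩

end IsMinuscule

section ClassicalTypes

variable {k m : ℕ} {i j : Fin k} {x : Fin k → ℝ}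

theorem eVec_self (i : Fin k) : eVec i i = 1 :=
  if_pos rfl

theorem eVec_of_ne (h : i ≠ j) : eVec i j = 0 :=
  if_neg h.symm

theorem sum_eVec (i : Fin k) : ∑ j, eVec i j = 1 := by
  simp only [eVec, Finset.sum_ite_eq', Finset.mem_univ, if_true]

theorem sum_eVec_mul (i : Fin k) (x : Fin k → ℝ) : ∑ j, eVec i j * x j = x i := by
  simp only [eVec, ite_mul, one_mul, zero_mul, Finset.sum_ite_eq', Finset.mem_univ, if_true]

theorem pairStd_eVec_sub_eVec (h : i ≠ j) (x : Fin k → ℝ) :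
    pairStd (eVec i - eVec j) x = x i - x j := by
  have hsum (y : Fin k → ℝ) : ∑ l, (eVec i - eVec j) l * y l = y i - y j := by
    simp only [Pi.sub_apply, sub_mul, Finset.sum_sub_distrib, sum_eVec_mul]
  rw [pairStd, hsum, hsum]
  simp only [Pi.sub_apply, eVec_self, eVec_of_ne h, eVec_of_ne h.symm]
  ring

theorem pairStd_eVec_add_eVec (h : i ≠ j) (x : Fin k → ℝ) :
    pairStd (eVec i + eVec j) x = x i + x j := by
  have hsum (y : Fin k → ℝ) : ∑ l, (eVec i + eVec j) l * y l = y i + y j := by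
    simp only [Pi.add_apply, add_mul, Finset.sum_add_distrib, sum_eVec_mul]
  rw [pairStd, hsum, hsum]
  simp only [Pi.add_apply, eVec_self, eVec_of_ne h, eVec_of_ne h.symm]
  ring

theorem pairStd_eVec (i : Fin k) (x : Fin k → ℝ) : pairStd (eVec i) x = 2 * x i := by
  rw [pairStd, sum_eVec_mul, sum_eVec_mul, eVec_self, div_one]

theorem pairStd_two_smul_eVec (i : Fin k) (x : Fin k → ℝ) :
    pairStd ((2 : ℝ) • eVec i) x = x i := by
  have hsum (y : Fin k → ℝ) : ∑ l, ((2 : ℝ) • eVec i) l * y l = 2 * y i := by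
    simp only [Pi.smul_apply, smul_eq_mul, mul_assoc, ← Finset.mul_sum, sum_eVec_mul]
  rw [pairStd, hsum, hsum, Pi.smul_apply, eVec_self, smul_eq_mul]
  ring

theorem stdA_subset_stdD : stdA m ⊆ stdD (m + 1) := by
  rintro _ ⟨i, j, hij, rfl⟩
  exact ⟨i, j, hij, Or.inr (Or.inl rfl)⟩

theorem apply_mem_of_mem_stdD (hx : x ∈ stdD k) (l : Fin k) : x l ∈ ({-1, 0, 1} : Set ℝ) := by
  obtain ⟨i, j, hij, hx⟩ := hx
  rcases eq_or_ne i l with rfl | hi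
  · rcases hx with rfl | rfl | rfl | rfl <;> simp [eVec_self, eVec_of_ne hij.symm]
  rcases eq_or_ne j l with rfl | hj
  · rcases hx with rfl | rfl | rfl | rfl <;> simp [eVec_self, eVec_of_ne hij]
  · rcases hx with rfl | rfl | rfl | rfl <;> simp [eVec_of_ne hi, eVec_of_ne hj]

theorem apply_mem_of_mem_stdB (hx : x ∈ stdB k) (l : Fin k) : x l ∈ ({-1, 0, 1} : Set ℝ) := by
  rcases hx with hx | ⟨i, hx⟩
  · exact apply_mem_of_mem_stdD hx l
  rcases eq_or_ne i l with rfl | hi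
  · rcases hx with rfl | rfl <;> simp [eVec_self]
  · rcases hx with rfl | rfl <;> simp [eVec_of_ne hi]

theorem half_sum_mem_of_mem_stdC (hx : x ∈ stdC k) :
    1 / 2 * ∑ l, x l ∈ ({-1, 0, 1} : Set ℝ) := by
  rcases hx with ⟨i, j, -, rfl | rfl | rfl | rfl⟩ | ⟨i, rfl | rfl⟩ <;>
    simp only [Pi.add_apply, Pi.sub_apply, Pi.neg_apply, Pi.smul_apply, smul_eq_mul,
      Finset.sum_add_distrib, Finset.sum_sub_distrib, Finset.sum_neg_distrib, ← Finset.mul_sum,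
      sum_eVec, Set.mem_insert_iff, Set.mem_singleton_iff] <;>
    norm_num

/-- The linear combinations of coroots of `Ψ`, as functions on the ambient space. -/
noncomputable def corootSpan (Ψ : Set (Fin k → ℝ)) : Submodule ℝ ((Fin k → ℝ) → ℝ) :=
  Submodule.span ℝ (pairStd '' Ψ)

theorem pairStd_mem_corootSpan {Ψ : Set (Fin k → ℝ)} (hx : x ∈ Ψ) : pairStd x ∈ corootSpan Ψ :=
  Submodule.subset_span ⟨x, hx, rfl⟩

theorem exists_isMinuscule_stdA (h : (stdA m).Nonempty) :
    ∃ g ∈ corootSpan (stdA m), IsMinuscule g (stdA m) := by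
  let g : (Fin (m + 1) → ℝ) → ℝ := (1 / (m + 1) : ℝ) • ∑ l : Fin m, pairStd (eVec 0 - eVec l.succ)
  have hg : ∀ x ∈ stdA m, g x = x 0 := by
    rintro _ ⟨p, q, -, rfl⟩
    set x := eVec p - eVec q
    have hsum : ∑ l : Fin (m + 1), x l = 0 := by
      simp only [x, Pi.sub_apply, Finset.sum_sub_distrib, sum_eVec, sub_self]
    rw [Fin.sum_univ_succ] at hsum
    simp only [g, Pi.smul_apply, Finset.sum_apply, smul_eq_mul,
      pairStd_eVec_sub_eVec (Fin.succ_ne_zero _).symm, Finset.sum_sub_distrib, Finset.sum_const,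
      Finset.card_univ, Fintype.card_fin, nsmul_eq_mul]
    rw [eq_neg_of_add_eq_zero_right hsum]
    field_simp
    ring
  refine ⟨g, Submodule.smul_mem _ _ (Submodule.sum_mem _ fun l _ => pairStd_mem_corootSpan
    ⟨0, l.succ, (Fin.succ_ne_zero l).symm, rfl⟩), fun x hx => ?_, ?_⟩
  · rw [hg x hx]
    exact apply_mem_of_mem_stdD (stdA_subset_stdD hx) 0
  · obtain ⟨i, hi⟩ : ∃ i : Fin (m + 1), 0 ≠ i := by
      obtain ⟨_, p, q, hpq, -⟩ := h
      by_contra! hzero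
      exact hpq ((hzero p).symm.trans (hzero q))
    have hmem : eVec 0 - eVec i ∈ stdA m := ⟨0, i, hi, rfl⟩
    refine ⟨_, hmem, ?_⟩
    rw [hg _ hmem, Pi.sub_apply, eVec_self, eVec_of_ne hi.symm, sub_zero]
    exact one_ne_zero

theorem exists_isMinuscule_stdB (h : (stdB m).Nonempty) :
    ∃ g ∈ corootSpan (stdB m), IsMinuscule g (stdB m) := by
  obtain ⟨i⟩ : Nonempty (Fin m) := by
    obtain ⟨_, ⟨i, -⟩ | ⟨i, -⟩⟩ := h <;> exact ⟨i⟩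
  have hi : eVec i ∈ stdB m := Or.inr ⟨i, Or.inl rfl⟩
  have hg (x : Fin m → ℝ) : ((1 / 2 : ℝ) • pairStd (eVec i)) x = x i := by
    rw [Pi.smul_apply, pairStd_eVec, smul_eq_mul]
    ring
  refine ⟨_, Submodule.smul_mem _ (1 / 2) (pairStd_mem_corootSpan hi), fun x hx => ?_,
    eVec i, hi, ?_⟩
  · rw [hg]
    exact apply_mem_of_mem_stdB hx i
  · rw [hg, eVec_self]
    exact one_ne_zero

theorem exists_isMinuscule_stdC (h : (stdC m).Nonempty) :
    ∃ g ∈ corootSpan (stdC m), IsMinuscule g (stdC m) := by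
  obtain ⟨i⟩ : Nonempty (Fin m) := by
    obtain ⟨_, ⟨i, -⟩ | ⟨i, -⟩⟩ := h <;> exact ⟨i⟩
  have hmem (i : Fin m) : (2 : ℝ) • eVec i ∈ stdC m := Or.inr ⟨i, Or.inl rfl⟩
  have hg (x : Fin m → ℝ) :
      ((1 / 2 : ℝ) • ∑ l, pairStd ((2 : ℝ) • eVec l)) x = 1 / 2 * ∑ l, x l := by
    simp only [Pi.smul_apply, Finset.sum_apply, pairStd_two_smul_eVec, smul_eq_mul]
  refine ⟨_, Submodule.smul_mem _ (1 / 2) (Submodule.sum_mem (t := Finset.univ) _ fun l _ =>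
    pairStd_mem_corootSpan (hmem l)), fun x hx => ?_, _, hmem i, ?_⟩
  · rw [hg]
    exact half_sum_mem_of_mem_stdC hx
  · rw [hg]
    simp only [Pi.smul_apply, smul_eq_mul, ← Finset.mul_sum, sum_eVec]
    norm_num

theorem exists_isMinuscule_stdD (h : (stdD m).Nonempty) :
    ∃ g ∈ corootSpan (stdD m), IsMinuscule g (stdD m) := by
  obtain ⟨_, i, j, hij, -⟩ := h
  have hadd : eVec i + eVec j ∈ stdD m := ⟨i, j, hij, Or.inl rfl⟩
  have hsub : eVec i - eVec j ∈ stdD m := ⟨i, j, hij, Or.inr (Or.inl rfl)⟩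
  have hg (x : Fin m → ℝ) :
      ((1 / 2 : ℝ) • (pairStd (eVec i + eVec j) + pairStd (eVec i - eVec j))) x = x i := by
    rw [Pi.smul_apply, Pi.add_apply, pairStd_eVec_add_eVec hij, pairStd_eVec_sub_eVec hij,
      smul_eq_mul]
    ring
  refine ⟨_, Submodule.smul_mem _ (1 / 2) (Submodule.add_mem _ (pairStd_mem_corootSpan hadd)
    (pairStd_mem_corootSpan hsub)), fun x hx => ?_, _, hadd, ?_⟩
  · rw [hg]
    exact apply_mem_of_mem_stdD hx i
  · rw [hg, Pi.add_apply, eVec_self, eVec_of_ne hij.symm, add_zero]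
    exact one_ne_zero

namespace factorIso

variable {R : RootSystemData V} {Φc : Set V} {Ψ : Set (Fin k → ℝ)}

theorem nonempty (h : factorIso R Φc Ψ) (hne : Φc.Nonempty) : Ψ.Nonempty := by
  obtain ⟨φ, hφ, -⟩ := h
  exact hφ.mapsTo.nonempty hne

theorem exists_isMinuscule (h : factorIso R Φc Ψ)
    (hΨ : ∃ g ∈ corootSpan Ψ, IsMinuscule g Ψ) : ∃ f : V →ₗ[ℝ] ℝ, IsMinuscule f Φc := by
  obtain ⟨φ, hφ, hpair⟩ := h
  obtain ⟨g, hgspan, hg⟩ := hΨ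
  obtain ⟨f, hf⟩ : ∃ f : V →ₗ[ℝ] ℝ, ∀ β ∈ Φc, f β = g (φ β) := by
    clear hg
    induction hgspan using Submodule.span_induction with
    | mem _ hx =>
      obtain ⟨_, hφα, rfl⟩ := hx
      obtain ⟨α, hα, rfl⟩ := hφ.surjOn hφα
      exact ⟨R.pairing α, fun β hβ => (hpair α hα β hβ).symm⟩
    | zero => exact ⟨0, fun _ _ => rfl⟩
    | add _ _ _ _ hx hy =>
      obtain ⟨f₁, hf₁⟩ := hx
      obtain ⟨f₂, hf₂⟩ := hy
      exact ⟨f₁ + f₂, fun β hβ => congrArg₂ (· + ·) (hf₁ β hβ) (hf₂ β hβ)⟩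
    | smul t _ _ hx =>
      obtain ⟨f₁, hf₁⟩ := hx
      exact ⟨t • f₁, fun β hβ => congrArg (t * ·) (hf₁ β hβ)⟩
  obtain ⟨_, hx, hne⟩ := hg.exists_ne_zero
  obtain ⟨β, hβ, rfl⟩ := hφ.surjOn hx
  exact ⟨f, fun β hβ => (hf β hβ).symm ▸ hg.apply_mem _ (hφ.mapsTo hβ), β, hβ, (hf β hβ).symm ▸ hne⟩

end factorIso

theorem NoExceptionalFactor.exists_isMinuscule {R : RootSystemData V} {ι : Type}
    {parts : ι → Set V} (h : NoExceptionalFactor R parts) {c : ι}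
    (hne : (PhiFactor R parts c).Nonempty) :
    ∃ f : V →ₗ[ℝ] ℝ, IsMinuscule f (PhiFactor R parts c) := by
  rcases h c with ⟨m, h⟩ | ⟨m, h⟩ | ⟨m, h⟩ | ⟨m, h⟩
  · exact h.exists_isMinuscule (exists_isMinuscule_stdA (h.nonempty hne))
  · exact h.exists_isMinuscule (exists_isMinuscule_stdB (h.nonempty hne))
  · exact h.exists_isMinuscule (exists_isMinuscule_stdC (h.nonempty hne))
  · exact h.exists_isMinuscule (exists_isMinuscule_stdD (h.nonempty hne))

theorem NoExceptionalFactor.exists_coeff_eq_one {R : RootSystemData V} {Pos Δ : Set V} {ι : Type}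
    {parts : ι → Set V} {hr : ι → V} {hco : ι → (V →₀ ℕ)} (h : NoExceptionalFactor R parts)
    (hB : IsBase R Pos Δ) (hparts : IsFactorDecomp R Δ parts)
    (hhr : IsHighestRootData R Pos parts hr hco) (c : ι) : ∃ a ∈ parts c, hco c a = 1 := by
  obtain ⟨f, hf⟩ := h.exists_isMinuscule ⟨hr c, hhr.mem_factor c⟩
  exact hf.exists_coeff_eq_one hB (hparts.union_eq ▸ Set.subset_iUnion parts c) hhr

end ClassicalTypes

/-- `T ⊆ W` is an upper set for the weak left order. Only the covering relations `w < s_a w` are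
mentioned; they are recognised by the positivity of the root `w⁻¹ a`. -/
structure IsWeakUpper (R : RootSystemData V) (Pos Δ : Set V) (T : Finset (V ≃ₗ[ℝ] V)) : Prop where
  mem_weylGroup : ∀ w ∈ T, w ∈ weylGroup R
  refl_mul_mem : ∀ w ∈ T, ∀ a ∈ Δ, w⁻¹ a ∈ Pos → R.refl a * w ∈ T

section TotalHeight

variable {R : RootSystemData V} {Pos Δ : Set V} {T : Finset (V ≃ₗ[ℝ] V)} {a β : V}
  {u w : V ≃ₗ[ℝ] V}

/-- The sum of the functionals `height ∘ w⁻¹` over `w ∈ T`, which measures the failure of `T` to be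
stable under left multiplication by the simple reflections. -/
noncomputable def IsBase.totalHeight (hB : IsBase R Pos Δ) (T : Finset (V ≃ₗ[ℝ] V)) : V →ₗ[ℝ] ℝ :=
  ∑ w ∈ T, hB.height ∘ₗ (w⁻¹ : V ≃ₗ[ℝ] V).toLinearMap

theorem IsBase.totalHeight_apply (hB : IsBase R Pos Δ) (T : Finset (V ≃ₗ[ℝ] V)) (x : V) :
    hB.totalHeight T x = ∑ w ∈ T, hB.height (w⁻¹ x) := by
  simp only [totalHeight, LinearMap.sum_apply, LinearMap.comp_apply, LinearEquiv.coe_coe]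

theorem IsBase.totalHeight_inv_apply (hB : IsBase R Pos Δ) (hu : ∀ w ∈ T, u * w ∈ T) (x : V) :
    hB.totalHeight T (u⁻¹ x) = hB.totalHeight T x := by
  have hinj : Set.InjOn (u * ·) T := (mul_right_injective u).injOn
  rw [hB.totalHeight_apply, hB.totalHeight_apply]
  refine Finset.sum_nbij (u * ·) hu hinj
    (Finset.surjOn_of_injOn_of_card_le _ hu hinj le_rfl) fun w _ => ?_
  rw [mul_inv_rev, LinearEquiv.mul_apply]

theorem sum_filter_refl_mul_mem_eq_zero (haΦ : a ∈ R.Phi) (T : Finset (V ≃ₗ[ℝ] V))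
    (f : V →ₗ[ℝ] ℝ) : ∑ w ∈ T with R.refl a * w ∈ T, f (w⁻¹ a) = 0 := by
  have hcancel (w : V ≃ₗ[ℝ] V) : f (w⁻¹ a) + f ((R.refl a * w)⁻¹ a) = 0 := by
    rw [R.refl_mul_inv_apply_self haΦ, map_neg, add_neg_cancel]
  refine Finset.sum_involution (fun w _ => R.refl a * w) (fun w _ => hcancel w)
    (fun w _ hne heq => hne ?_) (fun w hw => ?_) fun w _ => R.refl_mul_cancel_left haΦ w
  · have := hcancel w
    rw [heq] at this
    linarith
  · rw [Finset.mem_filter] at hw ⊢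
    rw [R.refl_mul_cancel_left haΦ]
    exact hw.symm

theorem IsBase.totalHeight_apply_eq_sum_filter (hB : IsBase R Pos Δ) (T : Finset (V ≃ₗ[ℝ] V))
    (haΦ : a ∈ R.Phi) :
    hB.totalHeight T a = ∑ w ∈ T with R.refl a * w ∉ T, hB.height (w⁻¹ a) := by
  rw [hB.totalHeight_apply, ← Finset.sum_filter_add_sum_filter_not T (fun w => R.refl a * w ∈ T),
    sum_filter_refl_mul_mem_eq_zero haΦ, zero_add]

namespace IsWeakUpper

theorem height_inv_apply_neg (hT : IsWeakUpper R Pos Δ T) (hB : IsBase R Pos Δ) (ha : a ∈ Δ)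
    (hw : w ∈ T) (hnot : R.refl a * w ∉ T) : hB.height (w⁻¹ a) < 0 := by
  have hmem := apply_mem_Phi (inv_mem (hT.mem_weylGroup w hw)) (hB.delta_subset_Phi ha)
  rw [← neg_pos, ← map_neg]
  exact hB.height_pos <| (hB.mem_or_neg _ hmem).resolve_left fun h =>
    hnot (hT.refl_mul_mem w hw a ha h)

theorem totalHeight_nonpos (hT : IsWeakUpper R Pos Δ T) (hB : IsBase R Pos Δ) (ha : a ∈ Δ) :
    hB.totalHeight T a ≤ 0 := by
  rw [hB.totalHeight_apply_eq_sum_filter T (hB.delta_subset_Phi ha)]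
  refine Finset.sum_nonpos fun w hw => ?_
  obtain ⟨hw, hnot⟩ := Finset.mem_filter.1 hw
  exact (hT.height_inv_apply_neg hB ha hw hnot).le

theorem refl_mul_mem_of_totalHeight_eq_zero (hT : IsWeakUpper R Pos Δ T) (hB : IsBase R Pos Δ)
    (ha : a ∈ Δ) (hzero : hB.totalHeight T a = 0) (hw : w ∈ T) : R.refl a * w ∈ T := by
  by_contra hnot
  refine hzero.not_lt ?_
  rw [hB.totalHeight_apply_eq_sum_filter T (hB.delta_subset_Phi ha)]
  refine Finset.sum_neg (fun v hv => ?_) ⟨w, Finset.mem_filter.2 ⟨hw, hnot⟩⟩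
  obtain ⟨hv, hvnot⟩ := Finset.mem_filter.1 hv
  exact hT.height_inv_apply_neg hB ha hv hvnot

theorem totalHeight_nonpos_of_mem_pos (hT : IsWeakUpper R Pos Δ T) (hB : IsBase R Pos Δ)
    (hβ : β ∈ Pos) : hB.totalHeight T β ≤ 0 := by
  refine neg_nonneg.1 (hB.apply_nonneg (f := -hB.totalHeight T) (fun a ha => ?_) hβ)
  exact neg_nonneg.2 (hT.totalHeight_nonpos hB ha)

end IsWeakUpper

end TotalHeight

section WOmega

variable {R : RootSystemData V} {Pos Δ : Set V} {ι : Type} {parts : ι → Set V} {hr : ι → V}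
  {hco : ι → (V →₀ ℕ)} {c : ι} {a b : V} {T : Finset (V ≃ₗ[ℝ] V)} {w : V ≃ₗ[ℝ] V}

theorem WOmega_le_weylGroup (hB : IsBase R Pos Δ) (hΔ : ∀ c, parts c ⊆ Δ) (hco : ι → (V →₀ ℕ)) :
    WOmega R Δ parts hco ≤ weylGroup R := by
  have hlongest {J : Set V} (hJ : J ⊆ Δ) : longestElt R Δ (WsubJ R J) ∈ weylGroup R :=
    WsubJ_mono (hJ.trans hB.delta_subset_Phi) (hB.isLongestIn_longestElt hJ).1
  refine (Subgroup.closure_le _).2 (Set.iUnion_subset fun c => ?_)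
  rintro _ (rfl | ⟨a, -, -, rfl⟩)
  · exact one_mem _
  · exact mul_mem (hlongest (Set.sdiff_subset.trans (hΔ c))) (hlongest (hΔ c))

theorem longestElt_mul_longestElt_mem_WOmega (ha : a ∈ parts c) (hone : hco c a = 1) :
    longestElt R Δ (WsubJ R (parts c \ {a})) * longestElt R Δ (WsubJ R (parts c)) ∈
      WOmega R Δ parts hco :=
  Subgroup.subset_closure (Set.mem_iUnion.2 ⟨c, Or.inr ⟨a, ha, hone, rfl⟩⟩)

theorem IsHighestRootData.apply_hr_mem_pos (hhr : IsHighestRootData R Pos parts hr hco)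
    (hB : IsBase R Pos Δ) (hΔ : parts c ⊆ Δ) (ha : a ∈ parts c) (hpos : 0 < hco c a)
    (hw : w ∈ WsubJ R (parts c \ {a})) : w (hr c) ∈ Pos := by
  have hJ : parts c \ {a} ⊆ Δ := Set.sdiff_subset.trans hΔ
  refine hB.mem_pos_of_apply_pos (fun b hb => hB.coweight_apply_nonneg (a := a) hb)
    (apply_mem_Phi (WsubJ_mono (hJ.trans hB.delta_subset_Phi) hw)
      (hB.pos_sub (hhr.mem_pos c))) ?_
  rw [hB.coweight_apply_of_mem_WsubJ hJ (fun h => h.2 rfl) hw, hhr.coweight_apply_hr hB hΔ ha]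
  exact Nat.cast_pos.2 hpos

namespace IsWeakUpper

theorem totalHeight_hr_nonneg (hT : IsWeakUpper R Pos Δ T) (hB : IsBase R Pos Δ)
    (hhr : IsHighestRootData R Pos parts hr hco) (hΔ : parts c ⊆ Δ)
    (hΩ : ∀ u ∈ WOmega R Δ parts hco, ∀ w ∈ T, u * w ∈ T) (ha : a ∈ parts c)
    (hone : hco c a = 1) : 0 ≤ hB.totalHeight T (hr c) := by
  have hJ : parts c \ {a} ⊆ Δ := Set.sdiff_subset.trans hΔ
  have hu := hΩ _ (longestElt_mul_longestElt_mem_WOmega ha hone)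
  have hw₁ := inv_mem (hB.isLongestIn_longestElt hJ).1
  set w₁ := longestElt R Δ (WsubJ R (parts c \ {a}))
  set w₂ := longestElt R Δ (WsubJ R (parts c))
  have hspan : w₁⁻¹ (hr c) ∈ Submodule.span ℝ (parts c) :=
    PhiFactor_subset_span <| apply_mem_PhiFactor (hΔ.trans hB.delta_subset_Phi)
      (WsubJ_mono Set.sdiff_subset hw₁) (hhr.mem_factor c)
  have hnonneg : ∀ b ∈ parts c, 0 ≤ hB.totalHeight T (w₂⁻¹ b) := by
    intro b hb
    rw [← neg_nonpos, ← map_neg]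
    exact hT.totalHeight_nonpos_of_mem_pos hB (hB.neg_longestElt_inv_apply_mem_pos hΔ hb)
  rw [← hB.totalHeight_inv_apply hu, mul_inv_rev, LinearEquiv.mul_apply]
  exact hB.apply_nonneg_of_mem_span (f := hB.totalHeight T ∘ₗ (w₂⁻¹ : V ≃ₗ[ℝ] V).toLinearMap)
    hΔ hnonneg (hhr.apply_hr_mem_pos hB hΔ ha (hone ▸ one_pos) hw₁) hspan

theorem refl_mul_mem_of_coeff_eq_one (hT : IsWeakUpper R Pos Δ T) (hB : IsBase R Pos Δ)
    (hhr : IsHighestRootData R Pos parts hr hco) (hΔ : parts c ⊆ Δ)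
    (hΩ : ∀ u ∈ WOmega R Δ parts hco, ∀ w ∈ T, u * w ∈ T) (ha : a ∈ parts c)
    (hone : hco c a = 1) (hb : b ∈ parts c) (hw : w ∈ T) : R.refl b * w ∈ T := by
  have hle : hB.totalHeight T (hr c) ≤ hB.totalHeight T b :=
    neg_le_neg_iff.1 <| hhr.apply_le (f := -hB.totalHeight T)
      (fun x hx => neg_nonneg.2 (hT.totalHeight_nonpos hB (hΔ hx)))
      (mem_PhiFactor hb (hB.delta_subset_Phi (hΔ hb)))
  have hnonneg := hT.totalHeight_hr_nonneg hB hhr hΔ hΩ ha hone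
  exact hT.refl_mul_mem_of_totalHeight_eq_zero hB (hΔ hb)
    (le_antisymm (hT.totalHeight_nonpos hB (hΔ hb)) (hnonneg.trans hle)) hw

end IsWeakUpper

end WOmega

section AdmissibleStep

variable {R : RootSystemData V} {Pos Δ : Set V} {ι : Type} {parts : ι → Set V} {hr : ι → V}
  {hco : ι → (V →₀ ℕ)} {w₀ w₁ : V ≃ₗ[ℝ] V}

/-- A single step `w_{i-1} → w_i` of the sequences in the theorem: `w_i ∈ W` lies above `w_{i-1}` in
the weak left order or in the same coset of `W_Ω`. -/
def AdmissibleStep (R : RootSystemData V) (Δ : Set V) (parts : ι → Set V) (hco : ι → (V →₀ ℕ))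
    (w w' : V ≃ₗ[ℝ] V) : Prop :=
  w' ∈ weylGroup R ∧ (ltJ (refls R Δ) (len R Δ) id w w' ∨ ∃ u ∈ WOmega R Δ parts hco, w' = u * w)

theorem reflTransGen_admissibleStep (hB : IsBase R Pos Δ) (hcover : ⋃ c, parts c = Δ)
    (hhr : IsHighestRootData R Pos parts hr hco) (hone : ∀ c, ∃ a ∈ parts c, hco c a = 1)
    (hw₀ : w₀ ∈ weylGroup R) (hw₁ : w₁ ∈ weylGroup R) :
    Relation.ReflTransGen (AdmissibleStep R Δ parts hco) w₀ w₁ := by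
  have hΔ (c : ι) : parts c ⊆ Δ := hcover ▸ Set.subset_iUnion parts c
  obtain ⟨T, hTdef⟩ : ∃ T : Finset (V ≃ₗ[ℝ] V), ∀ w, w ∈ T ↔ w ∈ weylGroup R ∧
      Relation.ReflTransGen (AdmissibleStep R Δ parts hco) w₀ w :=
    ⟨((finite_weylGroup R).sep _).toFinset, fun w => Set.Finite.mem_toFinset _⟩
  have hstep : ∀ w ∈ T, ∀ w', AdmissibleStep R Δ parts hco w w' → w' ∈ T := fun w hw w' h =>
    (hTdef w').2 ⟨h.1, ((hTdef w).1 hw).2.tail h⟩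
  have hT : IsWeakUpper R Pos Δ T :=
    { mem_weylGroup := fun w hw => ((hTdef w).1 hw).1
      refl_mul_mem := fun w hw a ha hpos =>
        have hwW := ((hTdef w).1 hw).1
        hstep w hw _ ⟨mul_mem (refl_mem_WsubJ (hB.delta_subset_Phi ha)) hwW,
          Or.inl (hB.ltJ_refl_mul hwW ha hpos)⟩ }
  have hΩ : ∀ u ∈ WOmega R Δ parts hco, ∀ w ∈ T, u * w ∈ T := fun u hu w hw =>
    hstep w hw _ ⟨mul_mem (WOmega_le_weylGroup hB hΔ hco hu) (hT.mem_weylGroup w hw),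
      Or.inr ⟨u, hu, rfl⟩⟩
  have hclosed : ∀ b ∈ Δ, ∀ w ∈ T, R.refl b * w ∈ T := by
    intro b hb w hw
    obtain ⟨c, hbc⟩ := Set.mem_iUnion.1 (hcover ▸ hb)
    obtain ⟨a, ha, hac⟩ := hone c
    exact hT.refl_mul_mem_of_coeff_eq_one hB hhr (hΔ c) hΩ ha hac hbc hw
  have htransitive : ∀ g ∈ WsubJ R Δ, g * w₀ ∈ T := fun g hg =>
    WsubJ_induction_left (p := fun g => g * w₀ ∈ T) hB.delta_subset_Phi
      ((hTdef _).2 ⟨hw₀, .refl⟩) (fun b hb g hg => mul_assoc (R.refl b) g w₀ ▸ hclosed b hb _ hg) hg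
  have hmem := htransitive (w₁ * w₀⁻¹) (hB.weylGroup_eq_WsubJ ▸ mul_mem hw₁ (inv_mem hw₀))
  rw [inv_mul_cancel_right] at hmem
  exact ((hTdef w₁).1 hmem).2

end AdmissibleStep

theorem exists_seq_of_reflTransGen {α : Type*} {r : α → α → Prop} {x y : α}
    (h : Relation.ReflTransGen r x y) :
    ∃ (n : ℕ) (w : ℕ → α), w 0 = x ∧ w n = y ∧ ∀ i < n, r (w i) (w (i + 1)) := by
  induction h using Relation.ReflTransGen.head_induction_on with
  | refl => exact ⟨0, fun _ => y, rfl, rfl, fun _ hi => absurd hi (Nat.not_lt_zero _)⟩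
  | @head x z hxz _ ih =>
    obtain ⟨n, w, rfl, hn, hw⟩ := ih
    refine ⟨n + 1, fun i => Nat.casesOn i x w, rfl, hn, fun i hi => ?_⟩
    cases i with
    | zero => exact hxz
    | succ i => exact hw i (Nat.lt_of_succ_lt_succ hi)

end

theorem statement_8_general {V : Type} [AddCommGroup V] [Module ℝ V]
    (R : RootSystemData V) (Pos Δ : Set V) (hBase : IsBase R Pos Δ)
    {ι : Type} (parts : ι → Set V) (hcover : ⋃ c, parts c = Δ)
    (hr : ι → V) (hco : ι → (V →₀ ℕ))
    (hhr : IsHighestRootData R Pos parts hr hco)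
    (hone : ∀ c, ∃ a ∈ parts c, hco c a = 1)
    {w₀ w₁ : V ≃ₗ[ℝ] V} (hw₀ : w₀ ∈ weylGroup R) (hw₁ : w₁ ∈ weylGroup R) :
    ∃ (r : ℕ) (w : ℕ → (V ≃ₗ[ℝ] V)),
      (∀ i, i ≤ r → w i ∈ weylGroup R) ∧
      w 0 = w₀ ∧ w r = w₁ ∧
      ∀ i, 1 ≤ i → i ≤ r →
        ltJ (refls R Δ) (len R Δ) id (w (i - 1)) (w i) ∨
        ∃ u ∈ WOmega R Δ parts hco, w i = u * w (i - 1) := by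
  obtain ⟨r, w, rfl, rfl, hstep⟩ :=
    exists_seq_of_reflTransGen (reflTransGen_admissibleStep hBase hcover hhr hone hw₀ hw₁)
  refine ⟨r, w, fun i hi => ?_, rfl, rfl, fun i h1 hi => ?_⟩
  · cases i with
    | zero => exact hw₀
    | succ i => exact (hstep i hi).1
  · obtain ⟨i, rfl⟩ := Nat.exists_eq_add_of_le' h1
    exact (hstep i hi).2

/-- If every irreducible factor of `Φ` is of type `A`, `B`, `C` or `D`,
then there is a sequence `w_Δ = w_0, w_1, …, w_r = 1` in `W` such that at each step
either `w_{i−1} <_∅ w_i` in the weak left order, or `w_i = u w_{i−1}` for some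
`u ∈ W_Ω`. -/
theorem statement_8 {V : Type} [AddCommGroup V] [Module ℝ V]
    (R : RootSystemData V) (Pos Δ : Set V) (hBase : IsBase R Pos Δ)
    {ι : Type} [Fintype ι] (parts : ι → Set V)
    (hparts : IsFactorDecomp R Δ parts)
    (hr : ι → V) (hco : ι → (V →₀ ℕ))
    (hhr : IsHighestRootData R Pos parts hr hco)
    (wD : V ≃ₗ[ℝ] V) (hwD : IsLongestIn R Δ (weylGroup R) wD)
    (hclassical : NoExceptionalFactor R parts) :
    ∃ (r : ℕ) (w : ℕ → (V ≃ₗ[ℝ] V)),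
      (∀ i, i ≤ r → w i ∈ weylGroup R) ∧
      w 0 = wD ∧ w r = 1 ∧
      ∀ i, 1 ≤ i → i ≤ r →
        ltJ (refls R Δ) (len R Δ) id (w (i - 1)) (w i) ∨
        ∃ u ∈ WOmega R Δ parts hco, w i = u * w (i - 1) :=
  statement_8_general R Pos Δ hBase parts hparts.union_eq hr hco hhr
    (hclassical.exists_coeff_eq_one hBase hparts hhr) hwD.1 (one_mem _)

end PaperSp
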